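/- arXiv:1911.10731 — 3 statements merged into one kernel-verified Lean document; each statement's English description precedes it below -/
import Mathlib

section
/- For every cellular automaton f on A^ℤ, the generic limit set ω̃(f) is a nonempty subshift (a nonempty closed σ-invariant subset of A^ℤ) and it is f-invariant: f(ω̃(f)) = ω̃(f). -/
open Filter Set Function

namespace Gls

variable {A : Type*}

/-- The left shift map on `A^ℤ`. -/
def shift (x : ℤ → A) : ℤ → A := fun i => x (i + 1)

/-- A cellular automaton: a continuous shift-commuting self-map of the full shift. -/
def IsCA [TopologicalSpace A] (f : (ℤ → A) → (ℤ → A)) : Prop :=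
  Continuous f ∧ f ∘ shift = shift ∘ f

/-- The set of limit points of the forward orbit of `x` under `f`. -/
def omegaSet [TopologicalSpace A] (f : (ℤ → A) → (ℤ → A)) (x : ℤ → A) : Set (ℤ → A) :=
  {y | MapClusterPt y atTop fun t => f^[t] x}

/-- The realm of attraction of `Y`. -/
def realm [TopologicalSpace A] (f : (ℤ → A) → (ℤ → A)) (Y : Set (ℤ → A)) : Set (ℤ → A) :=
  {x | omegaSet f x ⊆ Y}

/-- The generic limit set: the intersection of all closed sets whose realm is comeager. -/
def genLimitSet [TopologicalSpace A] (f : (ℤ → A) → (ℤ → A)) : Set (ℤ → A) :=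
  ⋂₀ {C | IsClosed C ∧ realm f C ∈ residual (ℤ → A)}

/-- The word `x_{[i, i+n)}` of length `n` read in the configuration `x` from position `i`. -/
def word (x : ℤ → A) (i : ℤ) (n : ℕ) : List A :=
  (List.range n).map fun k => x (i + k)

/-- The cylinder set `[w]_i`. -/
def cylinder (w : List A) (i : ℤ) : Set (ℤ → A) := {x | word x i w.length = w}

/-- The language of `X`: all finite words occurring in points of `X`. -/
def lang (X : Set (ℤ → A)) : Set (List A) :=
  {w | ∃ x ∈ X, ∃ i : ℤ, word x i w.length = w}

/-!
A compact Hausdorff system satisfies `f(ω(x)) = ω(x)` for every point `x`. Hence the realm of a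
closed set `C` is contained in the realms of the closed sets `f⁻¹(C)` and `f(C)`, and `f`-invariance
of the generic limit set reduces to one point: its own realm is comeager. This holds because, in a
hereditarily Lindelöf space, the intersection defining it is already attained by a countable
subfamily. Nonemptiness follows from the Baire category theorem, and shift-invariance
holds because the generic limit set is transported by homeomorphic conjugacies, the shift being a
conjugacy of `f` with itself.
-/

section TopologicalDynamics

open scoped omegaLimit

variable {X Y : Type*} [TopologicalSpace X] [TopologicalSpace Y] {f : X → X} {g : Y → Y}

theorem mapsTo_omegaLimit_iterate_of_semiconj {φ : X → Y} (hφ : Continuous φ)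
    (h : Semiconj φ f g) (s : Set X) :
    MapsTo φ (ω⁺ (fun t => f^[t]) s) (ω⁺ (fun t => g^[t]) (φ '' s)) :=
  mapsTo_omegaLimit s (mapsTo_image φ s) (fun t => h.iterate_right t) hφ

theorem mapsTo_omegaLimit_iterate (hf : Continuous f) (s : Set X) :
    MapsTo f (ω⁺ (fun t => f^[t]) s) (ω⁺ (fun t => f^[t]) s) := by
  have h_succ : MapsTo f (ω⁺ (fun t => f^[t]) s) (ω⁺ (fun t => f^[t + 1]) s) :=
    mapsTo_omegaLimit s (mapsTo_id s) (fun t x => (iterate_succ_apply' f t x).symm) hf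
  exact h_succ.mono_right (omegaLimit_subset_of_tendsto _ s (tendsto_add_atTop_nat 1))

theorem image_omegaLimit_iterate [CompactSpace X] [T2Space X] (hf : Continuous f) (s : Set X) :
    f '' ω⁺ (fun t => f^[t]) s = ω⁺ (fun t => f^[t]) s := by
  refine (mapsTo_omegaLimit_iterate hf s).image_subset.antisymm fun y hy => ?_
  by_contra hy_image
  have h_compact : IsCompact (f '' ω⁺ (fun t => f^[t]) s) :=
    (isClosed_omegaLimit _ _ s).isCompact.image hf
  -- `y` is kept away from all late iterates of `s`: they lie in `U`, whose closure misses `y`.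
  obtain ⟨U, V, hU, hV, h_image_U, hyV, hUV⟩ :=
    SeparatedNhds.of_isCompact_isCompact h_compact isCompact_singleton
      (disjoint_singleton_right.2 hy_image)
  have h_pre : ∀ᶠ t in atTop, MapsTo (f^[t]) s (f ⁻¹' U) :=
    eventually_mapsTo_of_isOpen_of_omegaLimit_subset atTop _ s (hU.preimage hf)
      (image_subset_iff.1 h_image_U)
  have h_succ : ∀ᶠ t in atTop, MapsTo (f^[t + 1]) s U :=
    h_pre.mono fun t ht x hx => by
      rw [iterate_succ_apply']
      exact ht hx
  have h_late : ∀ᶠ t in atTop, MapsTo (f^[t]) s U :=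
    (eventually_map.2 h_succ).filter_mono (map_add_atTop_eq_nat 1).ge
  have hyU : y ∈ closure U :=
    closure_mono (image2_subset_iff.2 fun _ (ht : MapsTo _ s U) _ hx => ht hx)
      (omegaLimit_subset_closure_image2 atTop _ s h_late hy)
  exact (hUV.closure_left hV).le_bot ⟨hyU, hyV rfl⟩

/-- The generic limit set of an arbitrary self-map `f` of a topological space, of which
`genLimitSet` is the case of the full shift. The limit points of the orbit of `x` are encoded as the
`omegaLimit` of the singleton `{x}`, and a property is generic if it holds on a residual set. -/
def genericLimitSet (f : X → X) : Set X :=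
  ⋂₀ {C | IsClosed C ∧ ∀ᶠ x in residual X, ω⁺ (fun t => f^[t]) {x} ⊆ C}

theorem isClosed_genericLimitSet (f : X → X) : IsClosed (genericLimitSet f) :=
  isClosed_sInter fun _ hC => hC.1

theorem genericLimitSet_subset {C : Set X} (hC : IsClosed C)
    (h : ∀ᶠ x in residual X, ω⁺ (fun t => f^[t]) {x} ⊆ C) : genericLimitSet f ⊆ C :=
  sInter_subset_of_mem ⟨hC, h⟩

theorem eventually_omegaLimit_subset_genericLimitSet [HereditarilyLindelofSpace X] (f : X → X) :
    ∀ᶠ x in residual X, ω⁺ (fun t => f^[t]) {x} ⊆ genericLimitSet f := by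
  let S : Set (Set X) := {C | IsClosed C ∧ ∀ᶠ x in residual X, ω⁺ (fun t => f^[t]) {x} ⊆ C}
  obtain ⟨T, hT, h_eq⟩ :=
    eq_closed_inter_countable (fun C : S => (C : Set X)) fun C => C.2.1
  have h_inter : ⋂ C ∈ T, (C : Set X) = genericLimitSet f := h_eq.trans sInter_eq_iInter.symm
  filter_upwards [(eventually_countable_ball hT).2 fun C _ => C.2.2] with x hx
  exact h_inter ▸ subset_iInter₂ hx

theorem nonempty_genericLimitSet [CompactSpace X] [BaireSpace X] [HereditarilyLindelofSpace X]
    [Nonempty X] (f : X → X) : (genericLimitSet f).Nonempty := by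
  obtain ⟨x, hx⟩ :=
    (dense_of_mem_residual (eventually_omegaLimit_subset_genericLimitSet f)).nonempty
  exact (nonempty_omegaLimit atTop _ _ (singleton_nonempty x)).mono hx

theorem image_genericLimitSet [CompactSpace X] [T2Space X] [HereditarilyLindelofSpace X]
    (hf : Continuous f) : f '' genericLimitSet f = genericLimitSet f := by
  have h_closed := isClosed_genericLimitSet f
  have h_realm := eventually_omegaLimit_subset_genericLimitSet f
  apply Subset.antisymm
  · refine image_subset_iff.2 (genericLimitSet_subset (h_closed.preimage hf) ?_)
    exact h_realm.mono fun x hx => (mapsTo_omegaLimit_iterate hf {x}).mono_right hx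
  · refine genericLimitSet_subset (h_closed.isCompact.image hf).isClosed ?_
    exact h_realm.mono fun x hx => (image_omegaLimit_iterate hf {x}).ge.trans (image_mono hx)

theorem mapsTo_genericLimitSet_of_semiconj {φ : X → Y} (hφ : Continuous φ) (hφ' : IsOpenMap φ)
    (h : Semiconj φ f g) : MapsTo φ (genericLimitSet f) (genericLimitSet g) := by
  rintro y hy C ⟨hC, hC_realm⟩
  refine genericLimitSet_subset (hC.preimage hφ) ?_ hy
  filter_upwards [(tendsto_residual_of_isOpenMap hφ hφ').eventually hC_realm] with x hx
  have h_maps := mapsTo_omegaLimit_iterate_of_semiconj hφ h {x}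
  rw [image_singleton] at h_maps
  exact h_maps.mono_right hx

theorem image_genericLimitSet_of_semiconj (e : X ≃ₜ Y) (h : Semiconj e f g) :
    e '' genericLimitSet f = genericLimitSet g := by
  have h_symm : Semiconj e.symm g f := h.inverse_left e.left_inv e.right_inv
  refine (mapsTo_genericLimitSet_of_semiconj e.continuous e.isOpenMap h).image_subset.antisymm ?_
  rw [e.image_eq_preimage_symm]
  exact mapsTo_genericLimitSet_of_semiconj e.symm.continuous e.symm.isOpenMap h_symm

end TopologicalDynamics

section FullShift

variable [TopologicalSpace A]

/-- The shift as a homeomorphism of `A^ℤ`, so that a cellular automaton is conjugated to itself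
by it. -/
def shiftHomeomorph : (ℤ → A) ≃ₜ (ℤ → A) where
  toFun := shift
  invFun x i := x (i - 1)
  left_inv x := funext fun i => congrArg x (sub_add_cancel i 1)
  right_inv x := funext fun i => congrArg x (add_sub_cancel_right i 1)
  continuous_toFun := continuous_pi fun i => continuous_apply (i + 1)
  continuous_invFun := continuous_pi fun i => continuous_apply (i - 1)

theorem omegaSet_eq_omegaLimit (f : (ℤ → A) → (ℤ → A)) (x : ℤ → A) :
    omegaSet f x = omegaLimit atTop (fun t => f^[t]) {x} :=
  ext fun y => (mem_omegaLimit_singleton_iff_mapClusterPt atTop _ x y).symm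

theorem genLimitSet_eq_genericLimitSet (f : (ℤ → A) → (ℤ → A)) :
    genLimitSet f = genericLimitSet f := by
  simp only [genLimitSet, genericLimitSet, realm, omegaSet_eq_omegaLimit, Filter.Eventually]

theorem stmt0_general [CompactSpace A] [T2Space A] [SecondCountableTopology A] [Nonempty A]
    (f : (ℤ → A) → (ℤ → A)) (hf : IsCA f) :
    (genLimitSet f).Nonempty ∧ IsClosed (genLimitSet f) ∧
      shift '' genLimitSet f = genLimitSet f ∧
      f '' genLimitSet f = genLimitSet f := by
  have h_shift : Semiconj shiftHomeomorph f f := semiconj_iff_comp_eq.2 hf.2.symm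
  rw [genLimitSet_eq_genericLimitSet]
  exact ⟨nonempty_genericLimitSet f, isClosed_genericLimitSet f,
    image_genericLimitSet_of_semiconj shiftHomeomorph h_shift, image_genericLimitSet hf.1⟩

end FullShift

/-- the generic limit set of a CA is a nonempty, closed, shift-invariant
(`σ(ω̃(f)) = ω̃(f)`) set, and it is `f`-invariant: `f(ω̃(f)) = ω̃(f)`. -/
theorem stmt0 [Fintype A] [Nonempty A] [TopologicalSpace A] [DiscreteTopology A]
    (f : (ℤ → A) → (ℤ → A)) (hf : IsCA f) :
    (genLimitSet f).Nonempty ∧ IsClosed (genLimitSet f) ∧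
      shift '' genLimitSet f = genLimitSet f ∧
      f '' genLimitSet f = genLimitSet f :=
  stmt0_general f hf

end Gls
end

section
/- Let f be a cellular automaton on A^ℤ, let n ∈ ℕ, and let [v]_i ⊆ A^ℤ be a cylinder set. Then there exist a cylinder set [w]_j ⊆ [v]_i and T ∈ ℕ such that for all t ≥ T and all x ∈ [w]_j, the word f^t(x)_{[0,n)} belongs to L_n(ω̃(f)). -/
/-!
The closed sets whose realm is comeager can be replaced by countably many with the same
intersection, so the realm of the generic limit set is itself comeager. By compactness the orbit of
a point of this realm is eventually inside any closed neighbourhood `C` of the generic limit set.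
Hence the closed sets of points whose orbit stays in `C` from time `T` on cover a comeager set, and
by Baire's theorem the union of their interiors is dense. Take for `C` the clopen set of
configurations whose window shows a word of the language of the generic limit set.
-/

open Filter Set Function

namespace Gls

variable {A : Type*}

open scoped Topology

section Words

/-- Unfolds the coercion of `List.range n` to `List ℤ` hidden in the definition of `word`. -/
theorem word_eq_map_range (x : ℤ → A) (i : ℤ) (n : ℕ) :
    word x i n = (List.range n).map fun k : ℕ => x (i + k) := by
  simp [word, List.map_eq_flatMap, List.flatMap_assoc]

theorem length_word (x : ℤ → A) (i : ℤ) (n : ℕ) : (word x i n).length = n := by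
  simp [word_eq_map_range]

theorem word_eq_word_iff {x y : ℤ → A} {i : ℤ} {n : ℕ} :
    word x i n = word y i n ↔ ∀ k < n, x (i + k) = y (i + k) := by
  simp [word_eq_map_range]

theorem mem_cylinder_word_iff {x y : ℤ → A} {i : ℤ} {n : ℕ} :
    y ∈ cylinder (word x i n) i ↔ ∀ k < n, y (i + k) = x (i + k) := by
  rw [cylinder, mem_ofPred_eq, length_word, word_eq_word_iff]

theorem word_mem_lang {X : Set (ℤ → A)} {x : ℤ → A} (hx : x ∈ X) (i : ℤ) (n : ℕ) :
    word x i n ∈ lang X :=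
  ⟨x, hx, i, by rw [length_word]⟩

theorem cylinder_nonempty [Nonempty A] (w : List A) (i : ℤ) : (cylinder w i).Nonempty := by
  inhabit A
  refine ⟨fun j => w.getD (j - i).toNat default, ?_⟩
  rw [cylinder, mem_ofPred_eq, word_eq_map_range]
  exact List.ext_getElem (by simp) fun k _ hk => by simp [hk]

theorem exists_cylinder_subset_of_mem_nhds [TopologicalSpace A] {x : ℤ → A} {U : Set (ℤ → A)}
    (hU : U ∈ 𝓝 x) : ∃ (i : ℤ) (n : ℕ), cylinder (word x i n) i ⊆ U := by
  rw [nhds_pi, Filter.mem_pi] at hU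
  obtain ⟨I, hI, u, hu, hsub⟩ := hU
  obtain ⟨m, hm⟩ : ∃ m : ℕ, ∀ a ∈ I, a.natAbs ≤ m := by
    simpa [bddAbove_def] using (hI.image Int.natAbs).bddAbove
  refine ⟨-m, 2 * m + 1, fun y hy => hsub fun a ha => ?_⟩
  have hyx : y a = x a := by
    have hwindow := hm a ha
    have hk := mem_cylinder_word_iff.1 hy (a + m).toNat (by omega)
    rwa [show -(m : ℤ) + (a + m).toNat = a by omega] at hk
  exact hyx ▸ mem_of_mem_nhds (hu a)

theorem isLocallyConstant_word [TopologicalSpace A] [DiscreteTopology A] (i : ℤ) (n : ℕ) :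
    IsLocallyConstant fun x : ℤ → A => word x i n := by
  refine (IsLocallyConstant.iff_eventually_eq _).2 fun x => ?_
  have hcoord (k : ℕ) : ∀ᶠ y : ℤ → A in 𝓝 x, y (i + k) = x (i + k) :=
    ((IsLocallyConstant.iff_continuous _).2 (continuous_apply (i + (k : ℤ)))).eventually_eq x
  filter_upwards [(eventually_all_finite (finite_lt_nat n)).2 fun k _ => hcoord k] with y hy
  exact word_eq_word_iff.2 hy

theorem isClopen_setOf_word_mem [TopologicalSpace A] [DiscreteTopology A] (i : ℤ) (n : ℕ)
    (S : Set (List A)) : IsClopen {x : ℤ → A | word x i n ∈ S} :=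
  ⟨⟨isLocallyConstant_word i n Sᶜ⟩, isLocallyConstant_word i n S⟩

theorem isClopen_cylinder [TopologicalSpace A] [DiscreteTopology A] (w : List A) (i : ℤ) :
    IsClopen (cylinder w i) :=
  (isLocallyConstant_word i w.length).isClopen_fiber w

end Words

section Realm

theorem isClosed_setOf_forall_ge_iterate_mem {X : Type*} [TopologicalSpace X] {f : X → X}
    (hf : Continuous f) {C : Set X} (hC : IsClosed C) (T : ℕ) :
    IsClosed {x | ∀ t ≥ T, f^[t] x ∈ C} := by
  simp only [ofPred_forall]
  exact isClosed_biInter fun t _ => hC.preimage (hf.iterate t)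

variable [TopologicalSpace A] (f : (ℤ → A) → (ℤ → A))

theorem realm_iInter {ι : Sort*} (Y : ι → Set (ℤ → A)) :
    realm f (⋂ i, Y i) = ⋂ i, realm f (Y i) := by
  ext x
  simp only [realm, mem_ofPred_eq, subset_iInter_iff, mem_iInter]

theorem realm_genLimitSet_mem_residual [SecondCountableTopology A] :
    realm f (genLimitSet f) ∈ residual (ℤ → A) := by
  obtain ⟨𝒞, h𝒞, hinter⟩ := eq_closed_inter_countable
    (fun C : {C | IsClosed C ∧ realm f C ∈ residual (ℤ → A)} => (C : Set (ℤ → A))) fun C => C.2.1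
  rw [genLimitSet, sInter_eq_iInter, ← hinter]
  simp only [realm_iInter]
  exact (countable_bInter_mem h𝒞).2 fun C _ => C.2.2

variable {f}

theorem tendsto_iterate_nhdsSet_of_mem_realm [CompactSpace A] {Y : Set (ℤ → A)} {x : ℤ → A}
    (hx : x ∈ realm f Y) : Tendsto (fun t => f^[t] x) atTop (𝓝ˢ Y) :=
  isCompact_univ.tendsto_nhdsSet_of_mapClusterPt (by simp) fun _ _ hy => hx hy

theorem dense_iUnion_interior_forall_ge_iterate_mem [CompactSpace A] [R1Space A]
    [SecondCountableTopology A] (hf : Continuous f) {C : Set (ℤ → A)} (hC : IsClosed C)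
    (hGC : C ∈ 𝓝ˢ (genLimitSet f)) :
    Dense (⋃ T : ℕ, interior {x | ∀ t ≥ T, f^[t] x ∈ C}) := by
  obtain ⟨R, hRrealm, hRGδ, hRdense⟩ := mem_residual.1 (realm_genLimitSet_mem_residual f)
  refine hRGδ.dense_iUnion_interior_of_closed hRdense
    (isClosed_setOf_forall_ge_iterate_mem hf hC) fun x hx => mem_iUnion.2 ?_
  exact eventually_atTop.1 (tendsto_iterate_nhdsSet_of_mem_realm (hRrealm hx) hGC)

end Realm

theorem stmt2_general [Finite A] [TopologicalSpace A] [DiscreteTopology A]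
    {f : (ℤ → A) → (ℤ → A)} (hf : Continuous f) (m : ℤ) (n : ℕ) {U : Set (ℤ → A)}
    (hU : IsOpen U) (hne : U.Nonempty) :
    ∃ (w : List A) (j : ℤ) (T : ℕ), cylinder w j ⊆ U ∧
      ∀ t ≥ T, ∀ x ∈ cylinder w j, word (f^[t] x) m n ∈ lang (genLimitSet f) := by
  set C : Set (ℤ → A) := {y | word y m n ∈ lang (genLimitSet f)}
  have hC : IsClopen C := isClopen_setOf_word_mem m n _
  have hGC : C ∈ 𝓝ˢ (genLimitSet f) := hC.isOpen.mem_nhdsSet.2 fun y hy => word_mem_lang hy m n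
  obtain ⟨x, hxU, hx⟩ :=
    (dense_iUnion_interior_forall_ge_iterate_mem hf hC.isClosed hGC).inter_open_nonempty U hU hne
  obtain ⟨T, hxT⟩ := mem_iUnion.1 hx
  obtain ⟨j, l, hsub⟩ := exists_cylinder_subset_of_mem_nhds
    (inter_mem (hU.mem_nhds hxU) (mem_interior_iff_mem_nhds.1 hxT))
  exact ⟨word x j l, j, T, fun y hy => (hsub hy).1, fun t ht y hy => (hsub hy).2 t ht⟩

/-- every cylinder `[v]_i` contains a cylinder `[w]_j` which is
`ω̃(f)`-forcing: for some `T` and all `t ≥ T`, every `x ∈ [w]_j` satisfies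
`f^t(x)_{[0,n)} ∈ L_n(ω̃(f))`. -/
theorem stmt2 [Fintype A] [Nonempty A] [TopologicalSpace A] [DiscreteTopology A]
    (f : (ℤ → A) → (ℤ → A)) (hf : IsCA f) (n : ℕ) (v : List A) (i : ℤ) :
    ∃ (w : List A) (j : ℤ) (T : ℕ), cylinder w j ⊆ cylinder v i ∧
      ∀ t ≥ T, ∀ x ∈ cylinder w j, word (f^[t] x) 0 n ∈ lang (genLimitSet f) :=
  stmt2_general hf.1 0 n (isClopen_cylinder v i).isOpen (cylinder_nonempty v i)

end Gls
end

section
/- Let f : {0,1}^ℤ → {0,1}^ℤ be the minimum cellular automaton defined by f(x)_i = min(x_i, x_{i+1}). Then the generic limit set of f is the singleton {x⁰}, where x⁰ is the all-zeros configuration. -/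
/-!
After `t` steps of the minimum automaton, cell `i` lies below every initial cell in `[i, i + t]`, so
it is the bottom symbol as soon as that window contains one. Hence every configuration in which
bottom occurs arbitrarily far to the right converges to the constant bottom configuration. Such
configurations form a residual set, so by the Baire property every realm that is comeager contains
one of them.
-/

open Filter Set Function

namespace Gls

variable {A : Type*}

section Product

variable {ι : Type*} {X : ι → Type*} [∀ i, TopologicalSpace (X i)] {U : ∀ i, Set (X i)}
  {l : Filter ι}

theorem tendsto_update_cofinite [DecidableEq ι] (x a : ∀ i, X i) :
    Tendsto (fun i => update x i (a i)) cofinite (nhds x) := by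
  refine tendsto_pi_nhds.2 fun j => tendsto_const_nhds.congr' ?_
  filter_upwards [eventually_cofinite_ne j] with i hij
  rw [update_of_ne hij.symm]

theorem isOpen_setOf_exists_apply_mem (s : Set ι) (hU : ∀ i, IsOpen (U i)) :
    IsOpen {x : ∀ i, X i | ∃ i ∈ s, x i ∈ U i} := by
  have h_iUnion : {x : ∀ i, X i | ∃ i ∈ s, x i ∈ U i} = ⋃ i ∈ s, eval i ⁻¹' U i := by
    ext x
    simp
  rw [h_iUnion]
  exact isOpen_biUnion fun i _ => (hU i).preimage (continuous_apply i)

theorem dense_setOf_exists_apply_mem [l.NeBot] (hl : l ≤ cofinite) {s : Set ι} (hs : s ∈ l)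
    (hU : ∀ i, (U i).Nonempty) : Dense {x : ∀ i, X i | ∃ i ∈ s, x i ∈ U i} := by
  classical
  choose a ha using hU
  intro x
  refine mem_closure_of_tendsto ((tendsto_update_cofinite x a).mono_left hl) ?_
  filter_upwards [hs] with i hi
  exact ⟨i, hi, by simpa only [update_self] using ha i⟩

theorem eventually_residual_frequently_apply_mem [l.NeBot] [l.IsCountablyGenerated]
    (hl : l ≤ cofinite) (hU : ∀ i, IsOpen (U i)) (hne : ∀ i, (U i).Nonempty) :
    ∀ᶠ x : ∀ i, X i in residual (∀ i, X i), ∃ᶠ i in l, x i ∈ U i := by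
  obtain ⟨s, hs⟩ := l.exists_antitone_basis
  simp only [hs.toHasBasis.frequently_iff, true_imp_iff, eventually_countable_forall]
  exact fun n => residual_of_dense_open (isOpen_setOf_exists_apply_mem (s n) hU)
    (dense_setOf_exists_apply_mem hl (hs.mem n) hne)

end Product

section GenericLimitSet

variable [TopologicalSpace A] [T2Space A] {f : (ℤ → A) → (ℤ → A)} {y : ℤ → A}

theorem omegaSet_eq_singleton_of_tendsto {x : ℤ → A}
    (h : Tendsto (fun t => f^[t] x) atTop (nhds y)) : omegaSet f x = {y} := by
  refine Subset.antisymm (fun z hz => ?_) (singleton_subset_iff.2 h.mapClusterPt)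
  have h_cluster : ClusterPt z (nhds y) := ClusterPt.mono hz h
  exact eq_of_nhds_neBot h_cluster

theorem genLimitSet_eq_singleton_of_tendsto [BaireSpace (ℤ → A)]
    (h : ∀ᶠ x in residual (ℤ → A), Tendsto (fun t => f^[t] x) atTop (nhds y)) :
    genLimitSet f = {y} := by
  have h_omega : ∀ᶠ x in residual (ℤ → A), omegaSet f x = {y} :=
    h.mono fun _ => omegaSet_eq_singleton_of_tendsto
  apply Subset.antisymm
  · exact sInter_subset_of_mem ⟨isClosed_singleton, h_omega.mono fun _ hx => hx.subset⟩
  · rintro z rfl C ⟨-, hC⟩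
    have : Nonempty (ℤ → A) := ⟨z⟩
    obtain ⟨x, hxC, hx⟩ := (dense_of_mem_residual (inter_mem hC h_omega)).nonempty
    exact hxC (hx.symm.subset rfl)

end GenericLimitSet

section MinCA

/-- The minimum cellular automaton over an alphabet with binary infima: each cell is replaced by the
infimum of itself and its right neighbour. Over `Fin 2` it is the automaton of `stmt3`. -/
def minCA [SemilatticeInf A] (x : ℤ → A) : ℤ → A := fun i => x i ⊓ x (i + 1)

theorem minCA_iterate_le [SemilatticeInf A] (x : ℤ → A) (i : ℤ) {k t : ℕ} (hkt : k ≤ t) :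
    minCA^[t] x i ≤ x (i + k) := by
  induction t generalizing i k with
  | zero => simp [Nat.le_zero.1 hkt]
  | succ t ih =>
    rw [iterate_succ_apply']
    cases k with
    | zero => exact inf_le_left.trans (ih i t.zero_le)
    | succ k =>
      have h_right : minCA^[t] x (i + 1) ≤ x (i + 1 + k) := ih (i + 1) (Nat.le_of_succ_le_succ hkt)
      rw [Nat.cast_succ, ← add_assoc, add_right_comm]
      exact inf_le_right.trans h_right

variable [SemilatticeInf A] [OrderBot A] [TopologicalSpace A]

theorem tendsto_minCA_iterate_bot {x : ℤ → A} (hx : ∃ᶠ j in atTop, x j = ⊥) :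
    Tendsto (fun t => minCA^[t] x) atTop (nhds ⊥) := by
  refine tendsto_pi_nhds.2 fun i => tendsto_const_nhds.congr' ?_
  obtain ⟨j, hij, hj⟩ := frequently_atTop.1 hx i
  obtain ⟨k, rfl⟩ := Int.le.dest hij
  filter_upwards [eventually_ge_atTop k] with t hkt
  exact (le_bot_iff.1 ((minCA_iterate_le x i hkt).trans_eq hj)).symm

theorem stmt3_general [DiscreteTopology A] : genLimitSet (minCA (A := A)) = {⊥} := by
  have h_bot : ∀ᶠ x in residual (ℤ → A), ∃ᶠ j in atTop, x j ∈ ({⊥} : Set A) :=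
    eventually_residual_frequently_apply_mem atTop_le_cofinite (fun _ => isOpen_discrete _)
      fun _ => singleton_nonempty _
  exact genLimitSet_eq_singleton_of_tendsto (h_bot.mono fun _ => tendsto_minCA_iterate_bot)

end MinCA

/-- the generic limit set of the minimum CA `f(x)_i = min(x_i, x_{i+1})`
on `{0,1}^ℤ` is the singleton consisting of the all-zeros configuration. -/
theorem stmt3 :
    genLimitSet (fun (x : ℤ → Fin 2) (i : ℤ) => min (x i) (x (i + 1))) =
      {fun _ : ℤ => (0 : Fin 2)} :=
  stmt3_general

end Gls
end
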